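/- arXiv:1906.09121 — 2 statements merged into one kernel-verified Lean document; each statement's English description precedes it below -/
import Mathlib

section
/- Let A be a real m×n matrix (m < n) of full rank m, let b be a real m-vector, and let u be the all-ones n-vector. Assume A u = 0. Then the minimum-norm solution x_N = Aᵀ (A Aᵀ)⁻¹ b is also a minimum-variance solution: for every real n-vector z with A z = b, the variance of z is at least ‖x_N‖², and the variance of x_N equals ‖x_N‖². -/
open Matrix

noncomputable def mean {n : ℕ} (x : Fin n → ℝ) : ℝ := (∑ i, x i) / n

noncomputable def variance {n : ℕ} (x : Fin n → ℝ) : ℝ := ∑ i, (x i - mean x) ^ 2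

/-!
Since `A u = 0`, centering `z` at its mean keeps it a solution of `A z = b` and turns its variance
into a squared norm, which is at least that of the minimum-norm solution. That solution lies in the
row space of `A`, which is orthogonal to `u`, so it is already centered.
-/

section FullRowRank

theorem isUnit_of_rank_eq_card {ι K : Type*} [Fintype ι] [DecidableEq ι] [Field K]
    {M : Matrix ι ι K} (hM : M.rank = Fintype.card ι) : IsUnit M := by
  rw [← mulVec_surjective_iff_isUnit, ← coe_mulVecLin, ← LinearMap.range_eq_top]
  apply Submodule.eq_top_of_finrank_eq
  rw [Module.finrank_fintype_fun_eq_card]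
  exact hM

variable {ι κ K : Type*} [Fintype ι] [DecidableEq ι] [Fintype κ]
  [Field K] [LinearOrder K] [IsStrictOrderedRing K] {A : Matrix ι κ K}

theorem isUnit_mul_transpose_of_rank_eq_card (hA : A.rank = Fintype.card ι) :
    IsUnit (A * Aᵀ) :=
  isUnit_of_rank_eq_card ((rank_self_mul_transpose A).trans hA)

theorem mulVec_transpose_mulVec_inv_mulVec (hA : A.rank = Fintype.card ι) (b : ι → K) :
    A *ᵥ (Aᵀ *ᵥ ((A * Aᵀ)⁻¹ *ᵥ b)) = b := by
  have hdet : IsUnit (A * Aᵀ).det :=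
    (isUnit_iff_isUnit_det _).mp (isUnit_mul_transpose_of_rank_eq_card hA)
  rw [mulVec_mulVec, mulVec_mulVec, mul_nonsing_inv _ hdet, one_mulVec]

end FullRowRank

section RowSpace

variable {ι κ R : Type*} [Fintype κ]

theorem sum_sq_le_sum_sq_of_dotProduct_eq [CommRing R] [LinearOrder R] [IsStrictOrderedRing R]
    {x w : κ → R} (h : w ⬝ᵥ x = x ⬝ᵥ x) : ∑ i, x i ^ 2 ≤ ∑ i, w i ^ 2 := by
  have pythagoras : (w - x) ⬝ᵥ (w - x) = w ⬝ᵥ w - x ⬝ᵥ x := by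
    rw [sub_dotProduct, dotProduct_sub, dotProduct_sub, dotProduct_comm x w, h, sub_self, sub_zero]
  have dotProduct_self_le : x ⬝ᵥ x ≤ w ⬝ᵥ w := by
    rw [← sub_nonneg, ← pythagoras]
    exact Finset.sum_nonneg fun i _ ↦ mul_self_nonneg ((w - x) i)
  simpa only [dotProduct, ← sq] using dotProduct_self_le

theorem sum_sq_transpose_mulVec_le [Fintype ι] [CommRing R] [LinearOrder R]
    [IsStrictOrderedRing R] {A : Matrix ι κ R} {y : ι → R} {w : κ → R}
    (hw : A *ᵥ w = A *ᵥ (Aᵀ *ᵥ y)) : ∑ i, (Aᵀ *ᵥ y) i ^ 2 ≤ ∑ i, w i ^ 2 := by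
  apply sum_sq_le_sum_sq_of_dotProduct_eq
  rw [dotProduct_transpose_mulVec, dotProduct_transpose_mulVec, hw]

theorem sum_transpose_mulVec_eq_zero [Fintype ι] [CommSemiring R] {A : Matrix ι κ R}
    (hA : A *ᵥ 1 = 0) (y : ι → R) : ∑ i, (Aᵀ *ᵥ y) i = 0 := by
  rw [← one_dotProduct, dotProduct_transpose_mulVec, hA, dotProduct_zero]

theorem mulVec_sub_const [CommRing R] {A : Matrix ι κ R} (hA : A *ᵥ 1 = 0) (z : κ → R) (c : R) :
    A *ᵥ (fun i ↦ z i - c) = A *ᵥ z := by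
  have hcenter : (fun i ↦ z i - c) = z - c • (1 : κ → R) := by
    ext i
    simp
  rw [hcenter, mulVec_sub, mulVec_smul, hA, smul_zero, sub_zero]

end RowSpace

theorem variance_eq_sum_sq_of_sum_eq_zero {n : ℕ} {x : Fin n → ℝ} (hx : ∑ i, x i = 0) :
    variance x = ∑ i, x i ^ 2 := by
  simp only [variance, mean, hx, zero_div, sub_zero]

theorem sum_sq_transpose_mulVec_le_variance {ι : Type*} [Fintype ι] {n : ℕ}
    {A : Matrix ι (Fin n) ℝ} (hA : A *ᵥ 1 = 0) {y : ι → ℝ} {z : Fin n → ℝ}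
    (hz : A *ᵥ z = A *ᵥ (Aᵀ *ᵥ y)) : ∑ i, (Aᵀ *ᵥ y) i ^ 2 ≤ variance z :=
  sum_sq_transpose_mulVec_le ((mulVec_sub_const hA z (mean z)).trans hz)

theorem mn_solution_is_mv (m n : ℕ) (hm : 0 < m) (hmn : m < n)
    (A : Matrix (Fin m) (Fin n) ℝ) (hrank : A.rank = m)
    (b : Fin m → ℝ)
    (u : Fin n → ℝ) (hu : u = fun _ => (1 : ℝ))
    (hAu : A *ᵥ u = 0)
    (xN : Fin n → ℝ) (hxN : xN = Aᵀ *ᵥ ((A * Aᵀ)⁻¹ *ᵥ b)) :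
    (∀ z : Fin n → ℝ, A *ᵥ z = b → (∑ i, xN i ^ 2) ≤ variance z) ∧
    variance xN = ∑ i, xN i ^ 2 := by
  subst hu hxN
  have solves : A *ᵥ (Aᵀ *ᵥ ((A * Aᵀ)⁻¹ *ᵥ b)) = b :=
    mulVec_transpose_mulVec_inv_mulVec (hrank.trans (Fintype.card_fin m).symm) b
  exact ⟨fun z hz ↦ sum_sq_transpose_mulVec_le_variance hAu (hz.trans solves.symm),
    variance_eq_sum_sq_of_sum_eq_zero (sum_transpose_mulVec_eq_zero hAu _)⟩
end

section
/- Let A be a real m×n matrix (m < n) of full rank m, let b be a real m-vector, and let u be the all-ones n-vector. Assume A u ≠ 0. Define α* = (uᵀ Aᵀ (A Aᵀ)⁻¹ b) / (uᵀ Aᵀ (A Aᵀ)⁻¹ A u) and x_B = Aᵀ (A Aᵀ)⁻¹ (b − (A u) α*). If z is a solution of A x = b whose variance is at most ‖x_B‖², then the mean of z equals α* and the zero-mean part of z equals x_B (hence z = x_B + α* u). -/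
open Matrix

/-!
`xB` lies in the row space of `A` and is orthogonal to `u`. For a solution `z` and a scalar `c`,
the difference `z - c • u - xB` has the same image under `A` as a multiple of `u`, and vectors in
the row space pair equally with vectors of equal image; hence it is orthogonal to `xB`. By
Pythagoras, `z - c • u` is no shorter than `xB`, with equality only if the two agree. Taking for
`c` the mean of `z`, the squared length of `z - c • u` is the variance of `z`.
-/

section MinNormSolution

variable {m n R : Type*} [Fintype m] [DecidableEq m] [Fintype n]

/-- The vector `Aᵀ (A Aᵀ)⁻¹ b`. If `A` has full row rank over an ordered field, it is the solution
of `A x = b` of least Euclidean norm, namely the one lying in the row space of `A`. If `A * Aᵀ` is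
not invertible, Mathlib's inverse is `0`, and so is this vector. -/
noncomputable def minNormSolution [CommRing R] (A : Matrix m n R) (b : m → R) : n → R :=
  Aᵀ *ᵥ ((A * Aᵀ)⁻¹ *ᵥ b)

theorem mulVec_minNormSolution [CommRing R] {A : Matrix m n R} (hA : IsUnit (A * Aᵀ).det)
    (b : m → R) : A *ᵥ minNormSolution A b = b := by
  rw [minNormSolution, mulVec_mulVec, mulVec_mulVec, mul_nonsing_inv _ hA, one_mulVec]

theorem minNormSolution_sub_smul [CommRing R] (A : Matrix m n R) (b c : m → R) (r : R) :
    minNormSolution A (b - r • c) = minNormSolution A b - r • minNormSolution A c := by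
  simp only [minNormSolution, mulVec_sub, mulVec_smul]

theorem dotProduct_minNormSolution_congr [CommRing R] {A : Matrix m n R} {v w : n → R}
    (hvw : A *ᵥ v = A *ᵥ w) (b : m → R) :
    v ⬝ᵥ minNormSolution A b = w ⬝ᵥ minNormSolution A b := by
  simp only [minNormSolution, dotProduct_transpose_mulVec, hvw]

theorem dotProduct_minNormSolution_mulVec_ne_zero [CommRing R] [LinearOrder R]
    [IsStrictOrderedRing R] {A : Matrix m n R} (hA : IsUnit (A * Aᵀ).det) {u : n → R}
    (hAu : A *ᵥ u ≠ 0) : u ⬝ᵥ minNormSolution A (A *ᵥ u) ≠ 0 := by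
  have hAp : A *ᵥ minNormSolution A (A *ᵥ u) = A *ᵥ u := mulVec_minNormSolution hA _
  rw [← dotProduct_minNormSolution_congr hAp, Ne, dotProduct_self_eq_zero]
  intro hp
  exact hAu (by rw [← hAp, hp, mulVec_zero])

theorem dotProduct_minNormSolution_sub_div_smul [Field R] {A : Matrix m n R} {u : n → R}
    {a : m → R} (ha : u ⬝ᵥ minNormSolution A a ≠ 0) (b : m → R) :
    u ⬝ᵥ minNormSolution A
      (b - ((u ⬝ᵥ minNormSolution A b) / (u ⬝ᵥ minNormSolution A a)) • a) = 0 := by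
  rw [minNormSolution_sub_smul, dotProduct_sub, dotProduct_smul, smul_eq_mul,
    div_mul_cancel₀ _ ha, sub_self]

end MinNormSolution

theorem isUnit_det_of_rank_eq_card {m K : Type*} [Fintype m] [DecidableEq m] [Field K]
    {M : Matrix m m K} (hM : M.rank = Fintype.card m) : IsUnit M.det := by
  rw [← isUnit_iff_isUnit_det, ← linearIndependent_rows_iff_isUnit,
    linearIndependent_iff_card_eq_finrank_span, ← hM, rank_eq_finrank_span_row, Set.finrank]

theorem eq_of_dotProduct_self_le {n R : Type*} [Fintype n] [CommRing R] [LinearOrder R]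
    [IsStrictOrderedRing R] {w x : n → R} (horth : (w - x) ⬝ᵥ x = 0)
    (hle : w ⬝ᵥ w ≤ x ⬝ᵥ x) : w = x := by
  have pythagoras : w ⬝ᵥ w = (w - x) ⬝ᵥ (w - x) + x ⬝ᵥ x := by
    simp only [sub_dotProduct, dotProduct_sub, dotProduct_comm x w] at horth ⊢
    linear_combination 2 * horth
  have hnonneg : 0 ≤ (w - x) ⬝ᵥ (w - x) := Finset.sum_nonneg fun _ _ ↦ mul_self_nonneg _
  exact sub_eq_zero.mp (dotProduct_self_eq_zero.mp (by linarith))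

theorem low_variance_solution_eq_general {m n R : Type*} [Fintype m] [DecidableEq m] [Fintype n]
    [Field R] [LinearOrder R] [IsStrictOrderedRing R]
    {A : Matrix m n R} (hrank : A.rank = Fintype.card m) {b : m → R}
    {u : n → R} (hAu : A *ᵥ u ≠ 0) {α : R}
    (hα : α = (u ⬝ᵥ minNormSolution A b) / (u ⬝ᵥ minNormSolution A (A *ᵥ u)))
    {x : n → R} (hx : x = minNormSolution A (b - α • (A *ᵥ u)))
    {z : n → R} (hz : A *ᵥ z = b) {c : R}
    (hle : (z - c • u) ⬝ᵥ (z - c • u) ≤ x ⬝ᵥ x) :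
    c = α ∧ z - c • u = x ∧ z = x + α • u := by
  have hA : IsUnit (A * Aᵀ).det :=
    isUnit_det_of_rank_eq_card (by rw [rank_self_mul_transpose, hrank])
  have hAx : A *ᵥ x = b - α • (A *ᵥ u) := by rw [hx, mulVec_minNormSolution hA]
  have hux : u ⬝ᵥ x = 0 := by
    rw [hx, hα]
    exact dotProduct_minNormSolution_sub_div_smul
      (dotProduct_minNormSolution_mulVec_ne_zero hA hAu) b
  have himage : A *ᵥ (z - c • u - x) = A *ᵥ ((α - c) • u) := by
    rw [mulVec_sub, mulVec_sub, mulVec_smul, mulVec_smul, hz, hAx, sub_smul]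
    abel
  have horth : (z - c • u - x) ⬝ᵥ x = 0 := calc
    (z - c • u - x) ⬝ᵥ x = ((α - c) • u) ⬝ᵥ x := by
      rw [hx] at himage ⊢
      exact dotProduct_minNormSolution_congr himage _
    _ = 0 := by rw [smul_dotProduct, hux, smul_zero]
  have hzx : z - c • u = x := eq_of_dotProduct_self_le horth hle
  have hc : c = α := by
    rw [hzx, sub_self, mulVec_zero, mulVec_smul, eq_comm, smul_eq_zero] at himage
    exact (sub_eq_zero.mp (himage.resolve_right hAu)).symm
  exact ⟨hc, hzx, by rw [← hzx, ← hc, sub_add_cancel]⟩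

theorem variance_eq_dotProduct_self {n : ℕ} (x : Fin n → ℝ) :
    variance x = (x - mean x • fun _ ↦ 1) ⬝ᵥ (x - mean x • fun _ ↦ 1) := by
  simp [variance, dotProduct, sq]

theorem low_variance_solution_eq (m n : ℕ) (hm : 0 < m) (hmn : m < n)
    (A : Matrix (Fin m) (Fin n) ℝ) (hrank : A.rank = m)
    (b : Fin m → ℝ)
    (u : Fin n → ℝ) (hu : u = fun _ => (1 : ℝ))
    (hAu : A *ᵥ u ≠ 0)
    (αs : ℝ)
    (hαs : αs = (u ⬝ᵥ Aᵀ *ᵥ ((A * Aᵀ)⁻¹ *ᵥ b)) /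
                (u ⬝ᵥ Aᵀ *ᵥ ((A * Aᵀ)⁻¹ *ᵥ (A *ᵥ u))))
    (xB : Fin n → ℝ)
    (hxB : xB = Aᵀ *ᵥ ((A * Aᵀ)⁻¹ *ᵥ (b - αs • (A *ᵥ u))))
    (z : Fin n → ℝ) (hz : A *ᵥ z = b)
    (hvar : variance z ≤ ∑ i, xB i ^ 2) :
    mean z = αs ∧ z - mean z • u = xB ∧ z = xB + αs • u := by
  subst hu
  exact low_variance_solution_eq_general (by simpa using hrank) hAu hαs hxB hz
    (by simpa only [variance_eq_dotProduct_self, dotProduct, ← sq] using hvar)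
end
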